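/- arXiv:0803.0917 — 3 statements merged into one kernel-verified Lean document; each statement's English description precedes it below -/
import Mathlib

section
/- Let T be a finite set of nonzero vectors of U such that ⟨u,v⟩ = 1 for all distinct u, v ∈ T. Then T has at most 5 elements (so the 5-element such sets are exactly the maximal ones). -/
/-!
For each `u` in a set of vectors pairing to `1` with each other, the affine functional
`⟨u, ·⟩ - 1` vanishes at every other member of the set, but not at `u`, since `⟨u, u⟩ = 0`. Hence
the set is affinely independent, so it has at most `dim U + 1 = 5` members.
-/

/-- The symplectic vector space `U = 𝔽₂⁴`. -/
abbrev Uspace : Type := Fin 4 → ZMod 2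

/-- The symplectic form on `U` with `⟨eᵢ,eⱼ⟩ = ⟨fᵢ,fⱼ⟩ = 0` and `⟨eᵢ,fⱼ⟩ = δᵢⱼ`,
where `e₁,e₂,f₁,f₂` are the standard basis vectors (coordinates `0,1,2,3`). -/
def symForm (x y : Uspace) : ZMod 2 :=
  x 0 * y 2 + x 1 * y 3 + x 2 * y 0 + x 3 * y 1

theorem affineIndependent_of_affineMap_apply_eq {R V P ι : Type*} [Ring R] [NoZeroDivisors R]
    [AddCommGroup V] [Module R V] [AddTorsor V P] {p : ι → P} (f : ι → P →ᵃ[R] R) (c : ι → R)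
    (hne : ∀ i, f i (p i) ≠ c i) (heq : ∀ i j, i ≠ j → f i (p j) = c i) :
    AffineIndependent R p := by
  intro s w hw hwp i hi
  have hsum : ∑ j ∈ s, w j * (f i (p j) - c i) = 0 := by
    calc
      ∑ j ∈ s, w j * (f i (p j) - c i)
      _ = ∑ j ∈ s, w j * (f i (p j) - f i (p i)) + (∑ j ∈ s, w j) * (f i (p i) - c i) := by
        rw [Finset.sum_mul, ← Finset.sum_add_distrib]
        simp only [← mul_add, sub_add_sub_cancel]
      _ = (f i).linear (∑ j ∈ s, w j • (p j -ᵥ p i)) := by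
        simp only [hw, zero_mul, add_zero, map_sum, map_smul, AffineMap.linearMap_vsub,
          vsub_eq_sub, smul_eq_mul]
      _ = (f i).linear (s.weightedVSub p w) := by
        rw [s.weightedVSub_eq_weightedVSubOfPoint_of_sum_eq_zero w p hw (p i),
          Finset.weightedVSubOfPoint_apply]
      _ = 0 := by rw [hwp, map_zero]
  have hterm : ∀ j ∈ s, j ≠ i → w j * (f i (p j) - c i) = 0 := fun j _ hji ↦ by
    rw [heq i j hji.symm, sub_self, mul_zero]
  have hi_term : w i * (f i (p i) - c i) = 0 := by
    rwa [Finset.sum_eq_single_of_mem i hi hterm] at hsum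
  exact (mul_eq_zero.mp hi_term).resolve_right (sub_ne_zero.mpr (hne i))

/-- The symplectic form `symForm`, bundled as a bilinear form. -/
def symBilinForm : LinearMap.BilinForm (ZMod 2) Uspace :=
  LinearMap.mk₂ (ZMod 2) symForm
    (fun x x' y ↦ by simp only [symForm, Pi.add_apply]; ring)
    (fun a x y ↦ by simp only [symForm, Pi.smul_apply, smul_eq_mul]; ring)
    (fun x y y' ↦ by simp only [symForm, Pi.add_apply]; ring)
    (fun a x y ↦ by simp only [symForm, Pi.smul_apply, smul_eq_mul]; ring)

theorem symBilinForm_isAlt : symBilinForm.IsAlt := by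
  intro x
  change symForm x x = 0
  calc
    symForm x x = (x 0 * x 2 + x 1 * x 3) + (x 0 * x 2 + x 1 * x 3) := by
      simp only [symForm]; ring
    _ = 0 := CharTwo.add_self_eq_zero _

theorem card_le_five_of_pairwise_one_general {K V : Type*} [Field K] [AddCommGroup V] [Module K V]
    [FiniteDimensional K V] (B : LinearMap.BilinForm K V) (c : K) (T : Finset V)
    (hself : ∀ u ∈ T, B u u ≠ c) (hpair : ∀ u ∈ T, ∀ v ∈ T, u ≠ v → B u v = c) :
    T.card ≤ Module.finrank K V + 1 := by
  have hT : AffineIndependent K ((↑) : T → V) :=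
    affineIndependent_of_affineMap_apply_eq (fun u ↦ (B u).toAffineMap) (fun _ ↦ c)
      (fun u ↦ hself u u.2) fun u v huv ↦ hpair u u.2 v v.2 (Subtype.coe_ne_coe.mpr huv)
  calc
    T.card = Fintype.card T := (Fintype.card_coe T).symm
    _ ≤ Module.finrank K (vectorSpan K (Set.range ((↑) : T → V))) + 1 := hT.card_le_finrank_succ
    _ ≤ Module.finrank K V + 1 := by gcongr; exact Submodule.finrank_le _

/-- A finite set of nonzero vectors of `U` pairing to `1` under the symplectic form
has at most 5 elements. -/
theorem card_le_five_of_pairwise_one (T : Finset Uspace)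
    (h0 : (0 : Uspace) ∉ T)
    (h1 : ∀ u ∈ T, ∀ v ∈ T, u ≠ v → symForm u v = 1) :
    T.card ≤ 5 := by
  simpa using card_le_five_of_pairwise_one_general symBilinForm 1 T
    (fun u _ ↦ (symBilinForm_isAlt u).trans_ne zero_ne_one) h1
end

section
/- Every nonzero vector of U lies in exactly two pentads; consequently the map sending an unordered pair {S, S'} of distinct pentads to the unique element of S ∩ S' is a bijection from the set of 2-element subsets of the set of pentads onto U ∖ {0} (which has 15 elements). -/
/-- A pentad is a set of 5 nonzero vectors of `U` pairing to `1` under the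
symplectic form. -/
def IsPentad (S : Finset Uspace) : Prop :=
  (0 : Uspace) ∉ S ∧ S.card = 5 ∧ ∀ u ∈ S, ∀ v ∈ S, u ≠ v → symForm u v = 1

lemma two_mul_card_filter_eq_one {G : Type*} [AddGroup G] [Fintype G] {f : G →+ ZMod 2} {g : G}
    (hg : f g = 1) :
    2 * (Finset.univ.filter fun x ↦ f x = 1).card = Fintype.card G := by
  have h_translate : (Finset.univ.filter fun x ↦ f x = 1).card =
      (Finset.univ.filter fun x ↦ ¬f x = 1).card := by
    refine Finset.card_equiv (Equiv.addRight g) fun x ↦ ?_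
    simp only [Finset.mem_filter_univ, Equiv.coe_addRight, map_add, hg]
    generalize f x = a
    revert a
    decide
  rw [two_mul]
  nth_rw 2 [h_translate]
  exact Finset.card_filter_add_card_filter_not _

section Transvection

variable {R M : Type*} [CommRing R] [AddCommGroup M] [Module R M] {B : LinearMap.BilinForm R M}

/-- The symplectic transvection `x ↦ x + ⟨u, x⟩ u` along `u`, for an alternating form. -/
def symplecticTransvection (hB : B.IsAlt) (u : M) : M ≃ₗ[R] M :=
  LinearEquiv.transvection (f := B u) (v := u) (hB.self_eq_zero u)

lemma symplecticTransvection_apply (hB : B.IsAlt) (u x : M) :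
    symplecticTransvection hB u x = x + B u x • u :=
  LinearEquiv.transvection.apply _ x

lemma apply_symplecticTransvection (hB : B.IsAlt) (u x y : M) :
    B (symplecticTransvection hB u x) (symplecticTransvection hB u y) = B x y := by
  simp only [symplecticTransvection_apply, map_add, map_smul, LinearMap.add_apply,
    LinearMap.smul_apply, hB.self_eq_zero, smul_eq_mul, ← hB.neg_eq u x]
  ring

end Transvection

section HyperbolicClique

variable {V : Type*} [AddCommGroup V] [Module (ZMod 2) V] {B : LinearMap.BilinForm (ZMod 2) V}
  {S T : Finset V} {u v x : V}

/-- A set of vectors of a symplectic space over `𝔽₂` any two of which form a hyperbolic pair. The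
pentads are the hyperbolic cliques with five elements. -/
def IsHyperbolicClique (B : LinearMap.BilinForm (ZMod 2) V) (S : Finset V) : Prop :=
  (S : Set V).Pairwise fun x y ↦ B x y = 1

/-- The image of a set of vectors under the symplectic transvection along `u`. -/
def transvect (hB : B.IsAlt) (u : V) (S : Finset V) : Finset V :=
  S.map (symplecticTransvection hB u).toEquiv.toEmbedding

lemma card_transvect (hB : B.IsAlt) (u : V) (S : Finset V) : (transvect hB u S).card = S.card :=
  Finset.card_map _

lemma mem_transvect (hB : B.IsAlt) : x ∈ transvect hB u S ↔ x + B u x • u ∈ S := by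
  have h_symm : (symplecticTransvection hB u).symm x = x + B u x • u := by
    rw [LinearEquiv.symm_apply_eq, symplecticTransvection_apply]
    simp [hB.self_eq_zero, add_assoc, ZModModule.add_self]
  rw [transvect, Finset.mem_map_equiv, ← h_symm]
  rfl

lemma mem_transvect_self (hB : B.IsAlt) : u ∈ transvect hB u S ↔ u ∈ S := by
  rw [mem_transvect, hB.self_eq_zero, zero_smul, add_zero]

lemma mem_transvect_of_apply_eq_one (hB : B.IsAlt) (hx : B u x = 1) :
    x ∈ transvect hB u S ↔ x + u ∈ S := by
  rw [mem_transvect, hx, one_smul]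

namespace IsHyperbolicClique

protected lemma transvect (hS : IsHyperbolicClique B S) (hB : B.IsAlt) (u : V) :
    IsHyperbolicClique B (transvect hB u S) := by
  rw [IsHyperbolicClique, transvect, Finset.coe_map]
  rintro _ ⟨x, hx, rfl⟩ _ ⟨y, hy, rfl⟩ hxy
  exact (apply_symplecticTransvection hB u x y).trans
    (hS hx hy fun h ↦ hxy (congrArg _ h))

lemma zero_notMem (hS : IsHyperbolicClique B S) (hcard : 1 < S.card) : 0 ∉ S := by
  intro h0
  obtain ⟨x, hx, hx0⟩ := Finset.exists_mem_ne hcard 0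
  simpa using hS h0 hx hx0.symm

lemma add_notMem (hS : IsHyperbolicClique B S) (hcard : 3 < S.card) (hu : u ∈ S) (hv : v ∈ S) :
    u + v ∉ S := by
  classical
  intro h_add
  obtain ⟨x, hx, hx'⟩ := Finset.exists_mem_notMem_of_card_lt_card
    (Finset.card_le_three.trans_lt hcard : ({u, v, u + v} : Finset V).card < S.card)
  simp only [Finset.mem_insert, Finset.mem_singleton, not_or] at hx'
  have h : B x (u + v) = 1 := hS hx h_add hx'.2.2
  rw [map_add, hS hx hu hx'.1, hS hx hv hx'.2.1] at h
  exact absurd h (by decide)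

lemma eq_of_mem_transvect (hS : IsHyperbolicClique B S) (hB : B.IsAlt) (hcard : 3 < S.card)
    (hu : u ∈ S) (hx : x ∈ S) (hx' : x ∈ transvect hB u S) : x = u := by
  by_contra hxu
  exact hS.add_notMem hcard hx hu
    ((mem_transvect_of_apply_eq_one hB (hS hu hx (Ne.symm hxu))).mp hx')

/-- The cardinality condition holds for cliques of five vectors in dimension four. It makes the two
disjoint sets `S \ {u}` and `u + (S \ {u})` as large together as the affine hyperplane
`⟨u, x⟩ = 1` containing them. -/
lemma mem_or_mem_transvect [Fintype V] (hS : IsHyperbolicClique B S) (hB : B.IsAlt)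
    (hcard : 3 < S.card) (hV : Fintype.card V = 4 * (S.card - 1)) (hu : u ∈ S) (hx : B u x = 1) :
    x ∈ S ∨ x ∈ transvect hB u S := by
  classical
  let H : Finset V := Finset.univ.filter fun y ↦ B u y = 1
  have h_disjoint : Disjoint (S.erase u) ((transvect hB u S).erase u) :=
    Finset.disjoint_left.mpr fun y hy hy' ↦ Finset.ne_of_mem_erase hy <|
      hS.eq_of_mem_transvect hB hcard hu (Finset.mem_of_mem_erase hy) (Finset.mem_of_mem_erase hy')
  have h_erase_subset {T : Finset V} (hT : IsHyperbolicClique B T) (huT : u ∈ T) :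
      T.erase u ⊆ H := fun y hy ↦
    Finset.mem_filter_univ _ |>.mpr
      (hT huT (Finset.mem_of_mem_erase hy) (Finset.ne_of_mem_erase hy).symm)
  have hu' : u ∈ transvect hB u S := (mem_transvect_self hB).mpr hu
  have h_card_H : 2 * H.card = Fintype.card V :=
    two_mul_card_filter_eq_one (f := (B u).toAddMonoidHom) hx
  have h_union : S.erase u ∪ (transvect hB u S).erase u = H := by
    refine Finset.eq_of_subset_of_card_le
      (Finset.union_subset (h_erase_subset hS hu) (h_erase_subset (hS.transvect hB u) hu')) ?_
    rw [Finset.card_union_of_disjoint h_disjoint, Finset.card_erase_of_mem hu,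
      Finset.card_erase_of_mem hu', card_transvect]
    omega
  have hxH : x ∈ S.erase u ∪ (transvect hB u S).erase u :=
    h_union ▸ (Finset.mem_filter_univ x).mpr hx
  exact (Finset.mem_union.mp hxH).imp Finset.mem_of_mem_erase Finset.mem_of_mem_erase

lemma subset_or_subset_transvect [Fintype V] (hS : IsHyperbolicClique B S)
    (hT : IsHyperbolicClique B T) (hB : B.IsAlt) (hScard : 3 < S.card) (hTcard : 3 < T.card)
    (hV : Fintype.card V = 4 * (S.card - 1)) (huS : u ∈ S) (huT : u ∈ T) :
    T ⊆ S ∨ T ⊆ transvect hB u S := by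
  have h_cover {t : V} (ht : t ∈ T) (htu : t ≠ u) : t ∈ S ∨ t ∈ transvect hB u S :=
    hS.mem_or_mem_transvect hB hScard hV huS (hT huT ht htu.symm)
  by_contra! h
  obtain ⟨⟨x, hxT, hxS⟩, ⟨y, hyT, hyS⟩⟩ := h.imp Finset.not_subset.mp Finset.not_subset.mp
  have hxu : x ≠ u := fun h ↦ hxS (h ▸ huS)
  have hyu : y ≠ u := fun h ↦ hyS (h.symm ▸ (mem_transvect_self hB).mpr huS)
  have hy : y ∈ S := (h_cover hyT hyu).resolve_right hyS
  have hx : x + u ∈ S := (mem_transvect_of_apply_eq_one hB (hT huT hxT hxu.symm)).mp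
    ((h_cover hxT hxu).resolve_left hxS)
  have hyx : y ≠ x := fun h ↦ hxS (h ▸ hy)
  have hyxu : y ≠ x + u := fun h ↦ hT.add_notMem hTcard hxT huT (h ▸ hyT)
  have h_one : B y (x + u) = 1 := hS hy hx hyxu
  rw [map_add, hT hyT hxT hyx, hT hyT huT hyu] at h_one
  exact absurd h_one (by decide)

end IsHyperbolicClique

end HyperbolicClique

/-- The form `symForm` as a bundled bilinear form. -/
def symBilin : LinearMap.BilinForm (ZMod 2) Uspace :=
  LinearMap.mk₂ (ZMod 2) symForm
    (fun x y z ↦ by simp only [symForm, Pi.add_apply]; ring)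
    (fun c x y ↦ by simp only [symForm, Pi.smul_apply, smul_eq_mul]; ring)
    (fun x y z ↦ by simp only [symForm, Pi.add_apply]; ring)
    (fun c x y ↦ by simp only [symForm, Pi.smul_apply, smul_eq_mul]; ring)

lemma isAlt_symBilin : symBilin.IsAlt := fun x ↦ by
  rw [symBilin, LinearMap.mk₂_apply, symForm]
  linear_combination (x 0 * x 2 + x 1 * x 3) * CharTwo.two_eq_zero (R := ZMod 2)

lemma card_uspace : Fintype.card Uspace = 16 := by
  simp [ZMod.card]

lemma card_uspace_ne_zero : Fintype.card {u : Uspace // u ≠ 0} = 15 := by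
  rw [Fintype.card_subtype_compl, card_uspace, Fintype.card_subtype_eq]

lemma isPentad_iff {S : Finset Uspace} :
    IsPentad S ↔ IsHyperbolicClique symBilin S ∧ S.card = 5 :=
  ⟨fun ⟨_, hcard, hS⟩ ↦ ⟨hS, hcard⟩, fun ⟨hS, hcard⟩ ↦ ⟨hS.zero_notMem (by omega), hcard, hS⟩⟩

instance : DecidablePred IsPentad := fun S ↦ by
  unfold IsPentad
  infer_instance

namespace IsPentad

variable {S T : Finset Uspace} {u v : Uspace}

lemma isHyperbolicClique (hS : IsPentad S) : IsHyperbolicClique symBilin S :=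
  (isPentad_iff.mp hS).1

lemma card_eq (hS : IsPentad S) : S.card = 5 :=
  hS.2.1

lemma three_lt_card (hS : IsPentad S) : 3 < S.card := by
  rw [hS.card_eq]
  norm_num

protected lemma transvect (hS : IsPentad S) (u : Uspace) :
    IsPentad (transvect isAlt_symBilin u S) :=
  isPentad_iff.mpr
    ⟨hS.isHyperbolicClique.transvect isAlt_symBilin u, (card_transvect _ u S).trans hS.card_eq⟩

lemma eq_or_eq_transvect (hS : IsPentad S) (hT : IsPentad T) (huS : u ∈ S) (huT : u ∈ T) :
    T = S ∨ T = transvect isAlt_symBilin u S := by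
  have h_subset := hS.isHyperbolicClique.subset_or_subset_transvect hT.isHyperbolicClique
    isAlt_symBilin hS.three_lt_card hT.three_lt_card (by rw [card_uspace, hS.card_eq]) huS huT
  refine h_subset.imp (fun h ↦ Finset.eq_of_subset_of_card_le h ?_)
    (fun h ↦ Finset.eq_of_subset_of_card_le h ?_)
  · rw [hS.card_eq, hT.card_eq]
  · rw [(hS.transvect u).card_eq, hT.card_eq]

lemma eq_of_mem_transvect (hS : IsPentad S) (hu : u ∈ S) (hv : v ∈ S)
    (hv' : v ∈ transvect isAlt_symBilin u S) : v = u :=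
  hS.isHyperbolicClique.eq_of_mem_transvect isAlt_symBilin hS.three_lt_card hu hv hv'

lemma ne_transvect (hS : IsPentad S) (hu : u ∈ S) : S ≠ transvect isAlt_symBilin u S := by
  intro h
  obtain ⟨x, hx, hxu⟩ := Finset.exists_mem_ne (hS.three_lt_card.trans' (by norm_num) : 1 < S.card) u
  exact hxu (hS.eq_of_mem_transvect hu hx (h ▸ hx))

lemma eq_of_mem_of_mem (hS : IsPentad S) (hT : IsPentad T) (hST : S ≠ T) (huS : u ∈ S)
    (huT : u ∈ T) (hvS : v ∈ S) (hvT : v ∈ T) : v = u := by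
  obtain rfl := (hS.eq_or_eq_transvect hT huS huT).resolve_left hST.symm
  exact hS.eq_of_mem_transvect huS hvS hvT

end IsPentad

/-- The pentad `e₁`, `f₁`, `e₁ + e₂ + f₁`, `e₁ + f₁ + f₂`, `e₁ + e₂ + f₁ + f₂`, which is moved by
transvections to pentads through the other nonzero vectors. -/
def basePentad : Finset Uspace :=
  {![1, 0, 0, 0], ![0, 0, 1, 0], ![1, 1, 1, 0], ![1, 0, 1, 1], ![1, 1, 1, 1]}

lemma isPentad_basePentad : IsPentad basePentad := by
  decide

lemma mem_basePentad_or_eq_add : ∀ u : Uspace, u ≠ 0 →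
    u ∈ basePentad ∨ ∃ a ∈ basePentad, ∃ b ∈ basePentad, b ≠ a ∧ a + b = u := by
  decide

lemma exists_isPentad_mem {u : Uspace} (hu : u ≠ 0) : ∃ S, IsPentad S ∧ u ∈ S := by
  obtain hu | ⟨a, ha, b, hb, hba, rfl⟩ := mem_basePentad_or_eq_add u hu
  · exact ⟨basePentad, isPentad_basePentad, hu⟩
  · refine ⟨_, isPentad_basePentad.transvect b, ?_⟩
    have h_apply : symBilin b (a + b) = 1 := by
      rw [map_add, isPentad_basePentad.isHyperbolicClique hb ha hba, isAlt_symBilin.self_eq_zero,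
        add_zero]
    rwa [mem_transvect_of_apply_eq_one _ h_apply, add_assoc, ZModModule.add_self, add_zero]

/-- The set of pentads containing the vector `u`. -/
def pentadsThrough (u : Uspace) : Finset {S : Finset Uspace // IsPentad S} :=
  Finset.univ.filter fun S ↦ u ∈ S.1

lemma mem_pentadsThrough {u : Uspace} {S : {S : Finset Uspace // IsPentad S}} :
    S ∈ pentadsThrough u ↔ u ∈ S.1 :=
  Finset.mem_filter_univ S

lemma card_pentadsThrough {u : Uspace} (hu : u ≠ 0) : (pentadsThrough u).card = 2 := by
  obtain ⟨S, hS, huS⟩ := exists_isPentad_mem hu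
  refine Finset.card_eq_two.mpr ⟨⟨S, hS⟩, ⟨_, hS.transvect u⟩,
    fun h ↦ hS.ne_transvect huS (congrArg Subtype.val h), ?_⟩
  ext T
  simp only [mem_pentadsThrough, Finset.mem_insert, Finset.mem_singleton, Subtype.ext_iff]
  refine ⟨hS.eq_or_eq_transvect T.2 huS, ?_⟩
  rintro (h | h)
  · rwa [h]
  · rwa [h, mem_transvect_self]

lemma natCard_isPentad_and_mem {u : Uspace} (hu : u ≠ 0) :
    Nat.card {S : Finset Uspace // IsPentad S ∧ u ∈ S} = 2 := by
  rw [← card_pentadsThrough hu, ← Nat.card_eq_finsetCard]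
  exact Nat.card_congr <| (Equiv.subtypeSubtypeEquivSubtypeInter IsPentad (u ∈ ·)).symm.trans <|
    Equiv.subtypeEquivRight fun _ ↦ mem_pentadsThrough.symm

lemma card_pentads : Fintype.card {S : Finset Uspace // IsPentad S} = 6 := by
  have h_vectors_in (S : {S : Finset Uspace // IsPentad S}) :
      (Finset.univ.filter fun u : {u : Uspace // u ≠ 0} ↦ u.1 ∈ S.1).card = 5 := by
    rw [← S.2.card_eq, ← Finset.card_map (Function.Embedding.subtype _)]
    congr 1
    ext u
    simpa using fun hu : u ∈ S.1 ↦ ne_of_mem_of_not_mem hu S.2.1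
  have h_incidences := Finset.card_mul_eq_card_mul
    (fun (u : {u : Uspace // u ≠ 0}) (S : {S : Finset Uspace // IsPentad S}) ↦ u.1 ∈ S.1)
    (s := Finset.univ) (t := Finset.univ) (fun u _ ↦ card_pentadsThrough u.2)
    (fun S _ ↦ h_vectors_in S)
  rw [Finset.card_univ, Finset.card_univ, card_uspace_ne_zero] at h_incidences
  omega

lemma pentadsThrough_injOn : Set.InjOn pentadsThrough {u | u ≠ 0} := by
  intro u hu v _ huv
  obtain ⟨S, hS, T, hT, hST⟩ := Finset.one_lt_card.mp
    (by rw [card_pentadsThrough hu]; norm_num : 1 < (pentadsThrough u).card)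
  exact (S.2.eq_of_mem_of_mem T.2 (Subtype.coe_ne_coe.mpr hST) (mem_pentadsThrough.mp hS)
    (mem_pentadsThrough.mp hT) (mem_pentadsThrough.mp (huv ▸ hS))
    (mem_pentadsThrough.mp (huv ▸ hT))).symm

/-- The correspondence sending a nonzero vector to the pair of pentads containing it; its inverse
sends a pair of pentads to their common vector. -/
noncomputable def pentadPairEquiv :
    {u : Uspace // u ≠ 0} ≃ {P : Finset {S : Finset Uspace // IsPentad S} // P.card = 2} :=
  Equiv.ofBijective (fun u ↦ ⟨pentadsThrough u, card_pentadsThrough u.2⟩) <|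
    (Fintype.bijective_iff_injective_and_card _).mpr
      ⟨fun u v h ↦ Subtype.ext (pentadsThrough_injOn u.2 v.2 (congrArg Subtype.val h)), by
        rw [card_uspace_ne_zero, Fintype.card_finset_len, card_pentads]
        rfl⟩

lemma coe_pentadPairEquiv (u : {u : Uspace // u ≠ 0}) :
    (pentadPairEquiv u).1 = pentadsThrough u :=
  rfl

/-- Every nonzero vector of `U` lies in exactly two pentads; consequently the map
sending an unordered pair of distinct pentads to an element lying in both of them
(necessarily the unique element of their intersection) is a bijection from the
2-element subsets of the set of pentads onto the 15-element set `U ∖ {0}`. -/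
theorem pentad_pairs_biject_nonzero_vectors :
    (∀ u : Uspace, u ≠ 0 → Nat.card {S : Finset Uspace // IsPentad S ∧ u ∈ S} = 2) ∧
    Nat.card {u : Uspace // u ≠ 0} = 15 ∧
    ∃ φ : {P : Finset {S : Finset Uspace // IsPentad S} // P.card = 2} →
        {u : Uspace // u ≠ 0},
      Function.Bijective φ ∧
      ∀ P : {P : Finset {S : Finset Uspace // IsPentad S} // P.card = 2},
        ∀ S ∈ P.1, (φ P : Uspace) ∈ (S : {S : Finset Uspace // IsPentad S}).1 := by
  refine ⟨fun u hu ↦ natCard_isPentad_and_mem hu, ?_, pentadPairEquiv.symm,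
    pentadPairEquiv.symm.bijective, fun P S hS ↦ ?_⟩
  · rw [Nat.card_eq_fintype_card, card_uspace_ne_zero]
  · rwa [← mem_pentadsThrough, ← coe_pentadPairEquiv, Equiv.apply_symm_apply]
end

section
/- There is a group isomorphism ψ : Γ₀(4) ≃* Γ(2) given by conjugation with the diagonal matrix diag(2,1): for every A = !![a,b;c,d] ∈ Γ₀(4) one has (ψ A) 0 0 = a, (ψ A) 0 1 = 2·b, 2·((ψ A) 1 0) = c, and (ψ A) 1 1 = d (so ψ A = !![a, 2b; c/2, d]). -/
open scoped MatrixGroups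

/-!
Conjugation by `D = diag(r, 1)` multiplies the upper-right entry of a matrix by `r` and divides the
lower-left one by `r`. It therefore carries `Γ₀(rs)` onto the group of matrices whose upper-right
entry is divisible by `r` and whose lower-left entry is divisible by `s`. For `r = s = 2` this group
is `Γ(2)`: the determinant condition forces both diagonal entries to be odd.

To stay over the base ring, where `D` need not be invertible, `B = D A D⁻¹` is read as `D A = B D`,
that is, `SemiconjBy D A B`.
-/

open CongruenceSubgroup Matrix

theorem exists_mulEquiv_forall_semiconjBy {H K M : Type*} [MulOneClass H] [MulOneClass K] [Monoid M]
    {d : M} (hd : IsRegular d) {f : H →* M} {g : K →* M}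
    (hf : Function.Injective f) (hg : Function.Injective g)
    (hfg : ∀ x, ∃ y, SemiconjBy d (f x) (g y)) (hgf : ∀ y, ∃ x, SemiconjBy d (f x) (g y)) :
    ∃ ψ : H ≃* K, ∀ x, SemiconjBy d (f x) (g (ψ x)) := by
  have right_unique {x y y'} (h : SemiconjBy d (f x) (g y)) (h' : SemiconjBy d (f x) (g y')) :
      y = y' := hg (hd.right (h.eq.symm.trans h'.eq))
  have left_unique {x x' y} (h : SemiconjBy d (f x) (g y)) (h' : SemiconjBy d (f x') (g y)) :
      x = x' := hf (hd.left (h.eq.trans h'.eq.symm))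
  choose ψ hψ using hfg
  have ψ_mul (x x' : H) : ψ (x * x') = ψ x * ψ x' :=
    right_unique (hψ _) (by simpa only [map_mul] using (hψ x).mul_right (hψ x'))
  have injective : Function.Injective ψ := fun x x' h => left_unique (hψ x) (h ▸ hψ x')
  have surjective : Function.Surjective ψ := fun y =>
    (hgf y).imp fun x hx => right_unique (hψ x) hx
  exact ⟨MulEquiv.ofBijective (MulHom.mk ψ ψ_mul) ⟨injective, surjective⟩, hψ⟩

section CommRing

variable {R : Type*} [CommRing R] {r s : R}

theorem isRegular_diagonal {n : Type*} [Fintype n] [DecidableEq n] {v : n → R}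
    (hv : ∀ i, IsRegular (v i)) : IsRegular (diagonal v) :=
  isRegular_of_isLeftRegular_det <| det_diagonal (d := v) ▸ .prod fun i _ => (hv i).left

theorem semiconjBy_diagonal_cons_one_iff {A B : Matrix (Fin 2) (Fin 2) R} :
    SemiconjBy (diagonal ![r, 1]) A B ↔
      r * A 0 0 = r * B 0 0 ∧ r * A 0 1 = B 0 1 ∧ A 1 0 = r * B 1 0 ∧ A 1 1 = B 1 1 := by
  simp only [SemiconjBy, ← Matrix.ext_iff, Fin.forall_fin_two, diagonal_mul, mul_diagonal,
    cons_val_zero, cons_val_one, one_mul, mul_one, mul_comm _ r, and_assoc]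

theorem exists_semiconjBy_diagonal_cons_one_of_mul_dvd {A : SL(2, R)} (h : r * s ∣ A 1 0) :
    ∃ B : SL(2, R), SemiconjBy (diagonal ![r, 1]) A.1 B.1 ∧ r ∣ B 0 1 ∧ s ∣ B 1 0 := by
  obtain ⟨c, hc⟩ := h
  have det_eq : !![A 0 0, r * A 0 1; s * c, A 1 1].det = 1 := by
    have hA := A.det_coe
    rw [det_fin_two] at hA
    rw [det_fin_two_of]
    linear_combination hA + A 0 1 * hc
  exact ⟨⟨_, det_eq⟩,
    semiconjBy_diagonal_cons_one_iff.2 ⟨rfl, rfl, hc.trans (mul_assoc r s c), rfl⟩,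
    dvd_mul_right r _, dvd_mul_right s _⟩

theorem exists_semiconjBy_diagonal_cons_one_of_dvd {B : SL(2, R)}
    (hr : r ∣ B 0 1) (hs : s ∣ B 1 0) :
    ∃ A : SL(2, R), SemiconjBy (diagonal ![r, 1]) A.1 B.1 ∧ r * s ∣ A 1 0 := by
  obtain ⟨b, hb⟩ := hr
  have det_eq : !![B 0 0, b; r * B 1 0, B 1 1].det = 1 := by
    have hB := B.det_coe
    rw [det_fin_two] at hB
    rw [det_fin_two_of]
    linear_combination hB + B 1 0 * hb
  exact ⟨⟨_, det_eq⟩, semiconjBy_diagonal_cons_one_iff.2 ⟨rfl, hb.symm, rfl, rfl⟩,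
    mul_dvd_mul_left r hs⟩

end CommRing

/-- The subgroup `Γ⁰(N)` of `SL(2, ℤ)` of matrices whose upper right-hand entry is divisible by `N`,
the transpose of `Γ₀(N)`. -/
def GammaUpper0 (N : ℕ) : Subgroup SL(2, ℤ) where
  carrier := {A | (N : ℤ) ∣ A 0 1}
  one_mem' := by simp
  mul_mem' {A B} hA hB := by
    change (N : ℤ) ∣ (A.1 * B.1) 0 1
    rw [mul_apply, Fin.sum_univ_two]
    exact dvd_add (dvd_mul_of_dvd_right hB _) (dvd_mul_of_dvd_left hA _)
  inv_mem' {A} hA := by simpa [adjugate_fin_two] using hA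

theorem mem_Gamma0_iff_dvd {N : ℕ} {A : SL(2, ℤ)} : A ∈ Gamma0 N ↔ (N : ℤ) ∣ A 1 0 :=
  Gamma0_mem.trans (ZMod.intCast_zmod_eq_zero_iff_dvd _ N)

theorem mem_GammaUpper0 {N : ℕ} {A : SL(2, ℤ)} : A ∈ GammaUpper0 N ↔ (N : ℤ) ∣ A 0 1 :=
  Iff.rfl

theorem Gamma_two_eq_GammaUpper0_inf_Gamma0 : Gamma 2 = GammaUpper0 2 ⊓ Gamma0 2 := by
  ext A
  rw [Gamma_mem, Subgroup.mem_inf, mem_GammaUpper0, Gamma0_mem,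
    ← ZMod.intCast_zmod_eq_zero_iff_dvd]
  refine ⟨fun ⟨_, hb, hc, _⟩ => ⟨hb, hc⟩, fun ⟨hb, hc⟩ => ?_⟩
  have diag_mul_eq_one : (A 0 0 : ZMod 2) * A 1 1 = 1 := by
    have hdet := congrArg (Int.cast : ℤ → ZMod 2) (A.1.det_fin_two ▸ A.det_coe)
    simpa [hb] using hdet
  have eq_one_of_mul_eq_one : ∀ x y : ZMod 2, x * y = 1 → x = 1 ∧ y = 1 := by decide
  obtain ⟨ha, hd⟩ := eq_one_of_mul_eq_one _ _ diag_mul_eq_one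
  exact ⟨ha, hb, hc, hd⟩

theorem exists_Gamma0_mulEquiv_semiconjBy_diagonal_cons_one (N M : ℕ) [NeZero N] :
    ∃ ψ : Gamma0 (N * M) ≃* ↥(GammaUpper0 N ⊓ Gamma0 M),
      ∀ A, SemiconjBy (diagonal ![(N : ℤ), 1]) A.1.1 (ψ A).1.1 := by
  have hN : IsRegular (N : ℤ) := .of_ne_zero (NeZero.ne _)
  have coe_injective (H : Subgroup SL(2, ℤ)) :
      Function.Injective (SpecialLinearGroup.coeMonoidHom.comp H.subtype) :=
    Subtype.coe_injective.comp Subtype.coe_injective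
  have diagonal_isRegular : IsRegular (diagonal ![(N : ℤ), 1]) :=
    isRegular_diagonal <| Fin.forall_fin_two.2 ⟨hN, isRegular_one⟩
  refine exists_mulEquiv_forall_semiconjBy diagonal_isRegular
    (coe_injective _) (coe_injective _) (fun A => ?_) (fun B => ?_)
  · obtain ⟨B, hAB, hb, hc⟩ := exists_semiconjBy_diagonal_cons_one_of_mul_dvd (r := (N : ℤ))
      (s := M) (by exact_mod_cast mem_Gamma0_iff_dvd.1 A.2)
    exact ⟨⟨B, hb, mem_Gamma0_iff_dvd.2 hc⟩, hAB⟩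
  · obtain ⟨A, hAB, hc⟩ := exists_semiconjBy_diagonal_cons_one_of_dvd B.2.1
      (mem_Gamma0_iff_dvd.1 B.2.2)
    exact ⟨⟨A, mem_Gamma0_iff_dvd.2 (by exact_mod_cast hc)⟩, hAB⟩

theorem gamma0_four_iso_gamma_two_general (N M : ℕ) [NeZero N] :
    ∃ ψ : Gamma0 (N * M) ≃* ↥(GammaUpper0 N ⊓ Gamma0 M),
      ∀ A : Gamma0 (N * M),
        (ψ A).1 0 0 = A.1 0 0 ∧ (ψ A).1 0 1 = N * A.1 0 1 ∧
        N * (ψ A).1 1 0 = A.1 1 0 ∧ (ψ A).1 1 1 = A.1 1 1 := by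
  obtain ⟨ψ, hψ⟩ := exists_Gamma0_mulEquiv_semiconjBy_diagonal_cons_one N M
  refine ⟨ψ, fun A => ?_⟩
  obtain ⟨ha, hb, hc, hd⟩ := semiconjBy_diagonal_cons_one_iff.1 (hψ A)
  exact ⟨mul_left_cancel₀ (NeZero.ne _) ha.symm, hb.symm, hc.symm, hd.symm⟩

/-- The congruence subgroups `Γ₀(4)` and `Γ(2)` of `SL(2,ℤ)` are isomorphic via
conjugation by `diag(2,1)`: the matrix `!![a,b;c,d] ∈ Γ₀(4)` is sent to
`!![a, 2b; c/2, d] ∈ Γ(2)`. -/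
theorem gamma0_four_iso_gamma_two :
    ∃ ψ : CongruenceSubgroup.Gamma0 4 ≃* CongruenceSubgroup.Gamma 2,
      ∀ A : CongruenceSubgroup.Gamma0 4,
        (((ψ A : SL(2, ℤ)) : Matrix (Fin 2) (Fin 2) ℤ) 0 0
            = ((A : SL(2, ℤ)) : Matrix (Fin 2) (Fin 2) ℤ) 0 0) ∧
        (((ψ A : SL(2, ℤ)) : Matrix (Fin 2) (Fin 2) ℤ) 0 1
            = 2 * ((A : SL(2, ℤ)) : Matrix (Fin 2) (Fin 2) ℤ) 0 1) ∧
        (2 * ((ψ A : SL(2, ℤ)) : Matrix (Fin 2) (Fin 2) ℤ) 1 0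
            = ((A : SL(2, ℤ)) : Matrix (Fin 2) (Fin 2) ℤ) 1 0) ∧
        (((ψ A : SL(2, ℤ)) : Matrix (Fin 2) (Fin 2) ℤ) 1 1
            = ((A : SL(2, ℤ)) : Matrix (Fin 2) (Fin 2) ℤ) 1 1) := by
  rw [Gamma_two_eq_GammaUpper0_inf_Gamma0]
  exact gamma0_four_iso_gamma_two_general 2 2
end
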